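/- Let k ≥ 4 be an integer and let G be a 3-connected k-regular graph of diameter 2. Then the set of proper k-colourings of G forms a single Kempe class. -/

import Mathlib

open SimpleGraph
open scoped Classical

variable {V : Type*}

/-- A proper `k`-colouring of `G`. -/
def IsProperColoring (G : SimpleGraph V) (k : ℕ) (c : V → Fin k) : Prop :=
  ∀ ⦃u v : V⦄, G.Adj u v → c u ≠ c v

/-- `c'` is obtained from `c` by a single Kempe change: the colours `a` and `b` are
swapped on the connected component (of the subgraph induced by the vertices coloured
`a` or `b`) containing `v0`, and all other vertices keep their colour. -/

def KempeStep (G : SimpleGraph V) (k : ℕ) (c c' : V → Fin k) : Prop :=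
  ∃ a b : Fin k, ∃ v0 : {x : V | c x = a ∨ c x = b},
    ∀ v : V, c' v =
      if h : c v = a ∨ c v = b then
        if (G.induce {x : V | c x = a ∨ c x = b}).Reachable v0 ⟨v, h⟩
          then Equiv.swap a b (c v) else c v
      else c v

/-- Two colourings are Kempe equivalent if one is obtained from the other by a finite
sequence of Kempe changes. -/
def KempeEquiv (G : SimpleGraph V) (k : ℕ) (c c' : V → Fin k) : Prop :=
  Relation.ReflTransGen (KempeStep G k) c c'

/-- The set of all proper `k`-colourings of `G` forms a single Kempe class. -/
def KempeClass (G : SimpleGraph V) (k : ℕ) : Prop :=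
  ∀ c c' : V → Fin k, IsProperColoring G k c → IsProperColoring G k c' →
    KempeEquiv G k c c'

/-- `G` is `d`-degenerate: every nonempty set of vertices contains a vertex with at
most `d` neighbours inside the set. -/
def Degenerate (G : SimpleGraph V) (d : ℕ) : Prop :=
  ∀ S : Set V, S.Nonempty → ∃ v ∈ S, (S ∩ G.neighborSet v).ncard ≤ d

/-- `G` is 3-connected: more than 3 vertices, and deleting any at most 2 vertices
leaves it connected. -/
def ThreeConnected [Fintype V] (G : SimpleGraph V) : Prop :=
  3 < Fintype.card V ∧ ∀ S : Set V, S.ncard ≤ 2 → (G.induce Sᶜ).Connected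

/-!
Identifying two nonadjacent vertices of `G` yields a `(k - 1)`-degenerate graph, by
`3`-connectedness and diameter `2`. By the theorem of Las Vergnas and Meyniel all `k`-colourings of
that graph are Kempe equivalent, hence so are all `k`-colourings of `G` giving the two vertices the
same colour.

If the colourings of `G` split into two nonempty parts closed under Kempe changes, each nonadjacent
pair therefore belongs to one part: call it red or blue. There is no triangle of nonadjacent pairs
in two colours, because its vertices can be given a common colour: identify them, together with a
further nonadjacent pair if that alone does not give a `(k - 1)`-degenerate graph. Thus all red
neighbours of a vertex are adjacent to all its blue neighbours, so there are fewer than `k` of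
either and `G` has fewer than `3k` vertices. On the other hand a vertex alone in its colour class
would contradict the splitting, so all classes have at least two vertices, and some class is a pair
`{u, a}`. Kempe changes at `a` show that `u` has at most one blue neighbour, and then, with the
colours exchanged, at most one red one. Hence `G` has at most `k + 3 < 2k` vertices, too few for
`k` classes of size two.
-/

section KempeSwap

variable {W : Type*} {k : ℕ} {G : SimpleGraph V} {H : SimpleGraph W} {a b : Fin k} {S T : Set V}
  {c c' : V → Fin k}

/-- `S` is a union of `(a, b)`-Kempe chains of the colouring `c`, that is, of connected components
of the subgraph induced by the colours `a` and `b`. -/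
structure IsKempeClosed (G : SimpleGraph V) (c : V → Fin k) (a b : Fin k) (S : Set V) : Prop where
  color_eq_or_eq : ∀ x ∈ S, c x = a ∨ c x = b
  mem_of_adj : ∀ x ∈ S, ∀ y, G.Adj x y → c y = a ∨ c y = b → y ∈ S

/-- The colouring obtained from `c` by swapping the colours `a` and `b` on `S`. It is a composition
of Kempe changes when `S` is Kempe closed, which allows several chains to be swapped at once. -/
noncomputable def kempeSwap (a b : Fin k) (S : Set V) (c : V → Fin k) : V → Fin k :=
  fun v => if v ∈ S then Equiv.swap a b (c v) else c v

lemma kempeSwap_of_mem {v : V} (hv : v ∈ S) : kempeSwap a b S c v = Equiv.swap a b (c v) :=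
  if_pos hv

lemma kempeSwap_of_notMem {v : V} (hv : v ∉ S) : kempeSwap a b S c v = c v :=
  if_neg hv

lemma kempeSwap_empty : kempeSwap a b ∅ c = c :=
  funext fun _ => kempeSwap_of_notMem (Set.notMem_empty _)

lemma kempeSwap_comp (f : W → V) : kempeSwap a b S c ∘ f = kempeSwap a b (f ⁻¹' S) (c ∘ f) :=
  rfl

lemma kempeSwap_kempeSwap : kempeSwap a b S (kempeSwap a b S c) = c := by
  funext v
  by_cases hv : v ∈ S
  · rw [kempeSwap_of_mem hv, kempeSwap_of_mem hv, Equiv.swap_apply_self]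
  · rw [kempeSwap_of_notMem hv, kempeSwap_of_notMem hv]

lemma kempeSwap_sdiff_kempeSwap (hTS : T ⊆ S) :
    kempeSwap a b (S \ T) (kempeSwap a b T c) = kempeSwap a b S c := by
  funext v
  by_cases hT : v ∈ T
  · rw [kempeSwap_of_notMem fun h => h.2 hT, kempeSwap_of_mem hT, kempeSwap_of_mem (hTS hT)]
  · simp only [kempeSwap, Set.mem_sdiff, hT, not_false_eq_true, and_true, if_false]

lemma kempeSwap_eq_or_eq_iff {v : V} :
    (kempeSwap a b S c v = a ∨ kempeSwap a b S c v = b) ↔ (c v = a ∨ c v = b) := by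
  by_cases hv : v ∈ S
  · simp [kempeSwap_of_mem hv, Equiv.swap_apply_eq_iff, or_comm]
  · rw [kempeSwap_of_notMem hv]

lemma isKempeClosed_kempeSwap_iff :
    IsKempeClosed G (kempeSwap a b T c) a b S ↔ IsKempeClosed G c a b S :=
  ⟨fun ⟨h₁, h₂⟩ => ⟨fun x hx => kempeSwap_eq_or_eq_iff.1 (h₁ x hx),
      fun x hx y hxy hy => h₂ x hx y hxy (kempeSwap_eq_or_eq_iff.2 hy)⟩,
    fun ⟨h₁, h₂⟩ => ⟨fun x hx => kempeSwap_eq_or_eq_iff.2 (h₁ x hx),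
      fun x hx y hxy hy => h₂ x hx y hxy (kempeSwap_eq_or_eq_iff.1 hy)⟩⟩

lemma IsKempeClosed.sdiff (hS : IsKempeClosed G c a b S) (hT : IsKempeClosed G c a b T) :
    IsKempeClosed G c a b (S \ T) where
  color_eq_or_eq x hx := hS.color_eq_or_eq x hx.1
  mem_of_adj x hx y hxy hy := ⟨hS.mem_of_adj x hx.1 y hxy hy, fun hyT =>
    hx.2 (hT.mem_of_adj y hyT x hxy.symm (hS.color_eq_or_eq x hx.1))⟩

lemma IsKempeClosed.preimage {c : W → Fin k} {S : Set W} (hS : IsKempeClosed H c a b S)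
    (f : G →g H) : IsKempeClosed G (c ∘ f) a b (f ⁻¹' S) where
  color_eq_or_eq x hx := hS.color_eq_or_eq (f x) hx
  mem_of_adj x hx y hxy hy := hS.mem_of_adj (f x) hx (f y) (f.map_adj hxy) hy

lemma isKempeClosed_image_supp
    (C : (G.induce {x | c x = a ∨ c x = b}).ConnectedComponent) :
    IsKempeClosed G c a b (Subtype.val '' C.supp) where
  color_eq_or_eq := by
    rintro _ ⟨x, -, rfl⟩
    exact x.2
  mem_of_adj := by
    rintro _ ⟨x, hx, rfl⟩ y hxy hy
    exact ⟨⟨y, hy⟩, C.mem_supp_of_adj_mem_supp hx hxy, rfl⟩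

lemma IsKempeClosed.image_supp_subset (hS : IsKempeClosed G c a b S)
    {v : {x | c x = a ∨ c x = b}} (hv : v.1 ∈ S) :
    Subtype.val ''
      ((G.induce {x | c x = a ∨ c x = b}).connectedComponentMk v).supp ⊆ S := by
  rintro _ ⟨x, hx, rfl⟩
  obtain ⟨p⟩ := (ConnectedComponent.exact hx).symm
  by_contra hxS
  obtain ⟨d, -, hd, hd'⟩ := p.exists_boundary_dart (Subtype.val ⁻¹' S) hv hxS
  exact hd' (hS.mem_of_adj _ hd _ d.adj d.snd.2)

lemma kempeStep_iff : KempeStep G k c c' ↔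
    ∃ a b, ∃ C : (G.induce {x | c x = a ∨ c x = b}).ConnectedComponent,
      c' = kempeSwap a b (Subtype.val '' C.supp) c := by
  have key (a b : Fin k) (v₀ : {x | c x = a ∨ c x = b}) (v : V) :
      (if h : c v = a ∨ c v = b then
        if (G.induce {x | c x = a ∨ c x = b}).Reachable v₀ ⟨v, h⟩
          then Equiv.swap a b (c v) else c v
      else c v) = kempeSwap a b (Subtype.val ''
        ((G.induce {x | c x = a ∨ c x = b}).connectedComponentMk v₀).supp) c v := by
    by_cases h : c v = a ∨ c v = b
    · simp [kempeSwap, h, reachable_comm]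
    · simp [kempeSwap, h]
  constructor
  · rintro ⟨a, b, v₀, h⟩
    exact ⟨a, b, connectedComponentMk _ v₀, funext fun v => (h v).trans (key a b v₀ v)⟩
  · rintro ⟨a, b, C, rfl⟩
    obtain ⟨v₀, rfl⟩ := C.exists_rep
    exact ⟨a, b, v₀, fun v => (key a b v₀ v).symm⟩

theorem IsKempeClosed.kempeEquiv_kempeSwap [Finite V] (hS : IsKempeClosed G c a b S) :
    KempeEquiv G k c (kempeSwap a b S c) := by
  induction hn : S.ncard using Nat.strong_induction_on generalizing c S with
  | _ n ih =>
  obtain rfl | ⟨v, hv⟩ := S.eq_empty_or_nonempty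
  · rw [kempeSwap_empty]
    exact .refl
  let C := (G.induce {x | c x = a ∨ c x = b}).connectedComponentMk ⟨v, hS.color_eq_or_eq v hv⟩
  have hvC : v ∈ Subtype.val '' C.supp := ⟨_, rfl, rfl⟩
  have hCS : Subtype.val '' C.supp ⊆ S := hS.image_supp_subset hv
  have hlt : (S \ Subtype.val '' C.supp).ncard < n :=
    hn ▸ Set.ncard_lt_ncard ⟨Set.sdiff_subset, fun h => (h hv).2 hvC⟩
  have hclosed : IsKempeClosed G (kempeSwap a b (Subtype.val '' C.supp) c) a b
      (S \ Subtype.val '' C.supp) :=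
    isKempeClosed_kempeSwap_iff.2 (hS.sdiff (isKempeClosed_image_supp C))
  have hrest := ih _ hlt hclosed rfl
  rw [kempeSwap_sdiff_kempeSwap hCS] at hrest
  exact .head (kempeStep_iff.2 ⟨a, b, C, rfl⟩) hrest

lemma KempeStep.exists_kempeSwap (h : KempeStep G k c c') :
    ∃ a b S, IsKempeClosed G c a b S ∧ c' = kempeSwap a b S c := by
  obtain ⟨a, b, C, rfl⟩ := kempeStep_iff.1 h
  exact ⟨a, b, _, isKempeClosed_image_supp C, rfl⟩

lemma KempeEquiv.symm [Finite V] (h : KempeEquiv G k c c') : KempeEquiv G k c' c := by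
  induction h with
  | refl => exact .refl
  | tail _ hstep ih =>
    obtain ⟨a, b, S, hS, rfl⟩ := hstep.exists_kempeSwap
    have hback := (isKempeClosed_kempeSwap_iff (T := S).2 hS).kempeEquiv_kempeSwap
    rw [kempeSwap_kempeSwap] at hback
    exact hback.trans ih

theorem KempeEquiv.comp_hom [Finite V] {c c' : W → Fin k} (f : G →g H)
    (h : KempeEquiv H k c c') : KempeEquiv G k (c ∘ f) (c' ∘ f) := by
  induction h with
  | refl => exact .refl
  | tail _ hstep ih =>
    obtain ⟨a, b, S, hS, rfl⟩ := hstep.exists_kempeSwap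
    exact ih.trans (hS.preimage f).kempeEquiv_kempeSwap

lemma isProperColoring_kempeSwap (hc : IsProperColoring G k c) (hS : IsKempeClosed G c a b S) :
    IsProperColoring G k (kempeSwap a b S c) := by
  have hne {x y : V} (hx : x ∈ S) (hy : y ∉ S) (hxy : G.Adj x y) :
      kempeSwap a b S c x ≠ kempeSwap a b S c y := by
    intro h
    have hcy := h ▸ kempeSwap_eq_or_eq_iff.2 (hS.color_eq_or_eq x hx)
    exact hy (hS.mem_of_adj x hx y hxy (kempeSwap_eq_or_eq_iff.1 hcy))
  intro x y hxy
  by_cases hx : x ∈ S <;> by_cases hy : y ∈ S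
  · rw [kempeSwap_of_mem hx, kempeSwap_of_mem hy]
    exact (Equiv.swap a b).injective.ne (hc hxy)
  · exact hne hx hy hxy
  · exact (hne hy hx hxy.symm).symm
  · rw [kempeSwap_of_notMem hx, kempeSwap_of_notMem hy]
    exact hc hxy

lemma IsProperColoring.of_kempeEquiv (hc : IsProperColoring G k c) (h : KempeEquiv G k c c') :
    IsProperColoring G k c' := by
  induction h with
  | refl => exact hc
  | tail _ hstep ih =>
    obtain ⟨a, b, S, hS, rfl⟩ := hstep.exists_kempeSwap
    exact isProperColoring_kempeSwap ih hS

lemma IsProperColoring.kempeEquiv_update [Finite V] (hc : IsProperColoring G k c) {v : V}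
    {j : Fin k} (hj : ∀ y, G.Adj v y → c y ≠ j) :
    KempeEquiv G k c (Function.update c v j) := by
  have hclosed : IsKempeClosed G c (c v) j {v} := by
    refine ⟨fun x hx => .inl (congrArg c hx), ?_⟩
    rintro x rfl y hxy (hy | hy)
    · exact absurd hy.symm (hc hxy)
    · exact absurd hy (hj y hxy)
  convert hclosed.kempeEquiv_kempeSwap using 1
  funext x
  by_cases hx : x = v
  · subst hx
    simp [kempeSwap]
  · simp [kempeSwap, hx]

end KempeSwap

section Degenerate

variable {k d : ℕ} {G : SimpleGraph V} {a b : Fin k} {c : V → Fin k} {w : V}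

lemma exists_color_ne_of_ncard_lt {N : Set V} (h : (c '' N).ncard < k) : ∃ j, ∀ x ∈ N, c x ≠ j := by
  have hne : c '' N ≠ Set.univ := by
    intro huniv
    rw [huniv, Set.ncard_univ, Nat.card_fin] at h
    exact h.false
  obtain ⟨j, hj⟩ := (Set.ne_univ_iff_exists_notMem _).1 hne
  exact ⟨j, fun x hx hxj => hj ⟨x, hx, hxj⟩⟩

lemma IsProperColoring.exists_kempeEquiv_recolor [Finite V] (hc : IsProperColoring G k c)
    (hw : (G.neighborSet w).ncard < k) {y z : V} (hy : G.Adj w y) (hz : G.Adj w z) (hyz : y ≠ z)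
    (hcyz : c y = c z) : ∃ j ≠ c w, KempeEquiv G k c (Function.update c w j) := by
  have himage : c '' (G.neighborSet w \ {z}) = c '' G.neighborSet w := by
    refine (Set.image_mono Set.sdiff_subset).antisymm ?_
    rintro _ ⟨x, hx, rfl⟩
    by_cases hxz : x = z
    · exact ⟨y, ⟨hy, hyz⟩, hxz ▸ hcyz⟩
    · exact ⟨x, ⟨hx, hxz⟩, rfl⟩
  have hcard : (c '' insert w (G.neighborSet w)).ncard < k :=
    calc (c '' insert w (G.neighborSet w)).ncard
        = (insert (c w) (c '' (G.neighborSet w \ {z}))).ncard := by rw [Set.image_insert_eq, himage]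
      _ ≤ (c '' (G.neighborSet w \ {z})).ncard + 1 := Set.ncard_insert_le _ _
      _ ≤ (G.neighborSet w \ {z}).ncard + 1 := by gcongr; exact Set.ncard_image_le
      _ = (G.neighborSet w).ncard := Set.ncard_sdiff_singleton_add_one hz
      _ < k := hw
  obtain ⟨j, hj⟩ := exists_color_ne_of_ncard_lt hcard
  exact ⟨j, (hj w (.inl rfl)).symm, hc.kempeEquiv_update fun x hx => hj x (.inr hx)⟩

lemma IsKempeClosed.exists_preimage_eq {S : Set ({w}ᶜ : Set V)}
    (hS : IsKempeClosed (G.induce {w}ᶜ) (c ∘ Subtype.val) a b S)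
    (hw : c w = a ∨ c w = b → {y | G.Adj w y ∧ (c y = a ∨ c y = b)}.Subsingleton) :
    ∃ T, IsKempeClosed G c a b T ∧ Subtype.val ⁻¹' T = S := by
  have hmem {x y : V} (hx : x ∈ Subtype.val '' S) (hyw : y ≠ w) (hxy : G.Adj x y)
      (hy : c y = a ∨ c y = b) : y ∈ Subtype.val '' S := by
    obtain ⟨x, hxS, rfl⟩ := hx
    exact ⟨⟨y, hyw⟩, hS.mem_of_adj x hxS ⟨y, hyw⟩ hxy hy, rfl⟩
  have hcolor : ∀ x ∈ Subtype.val '' S, c x = a ∨ c x = b := by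
    rintro _ ⟨x, hx, rfl⟩
    exact hS.color_eq_or_eq x hx
  by_cases h : (c w = a ∨ c w = b) ∧ ∃ y ∈ Subtype.val '' S, G.Adj w y
  · obtain ⟨hcw, y, hyS, hwy⟩ := h
    refine ⟨insert w (Subtype.val '' S), ⟨?_, ?_⟩, ?_⟩
    · rintro x (rfl | hx)
      exacts [hcw, hcolor x hx]
    · rintro x (rfl | hx) z hxz hz
      · exact .inr (hw hcw ⟨hxz, hz⟩ ⟨hwy, hcolor y hyS⟩ ▸ hyS)
      · by_cases hzw : z = w
        exacts [.inl hzw, .inr (hmem hx hzw hxz hz)]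
    · ext x
      simp [show x.1 ≠ w from x.2]
  · refine ⟨Subtype.val '' S, ⟨hcolor, fun x hx z hxz hz => ?_⟩,
      Set.preimage_image_eq _ Subtype.val_injective⟩
    have hzw : z ≠ w := by
      rintro rfl
      exact h ⟨hz, x, hx, hxz.symm⟩
    exact hmem hx hzw hxz hz

lemma IsProperColoring.exists_kempeEquiv_subsingleton [Finite V] (hc : IsProperColoring G k c)
    (hw : (G.neighborSet w).ncard < k) (a b : Fin k) :
    ∃ j, KempeEquiv G k c (Function.update c w j) ∧
      (j = a ∨ j = b → {y | G.Adj w y ∧ (c y = a ∨ c y = b)}.Subsingleton) := by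
  by_cases h : c w = a ∨ c w = b → {y | G.Adj w y ∧ (c y = a ∨ c y = b)}.Subsingleton
  · exact ⟨c w, by rw [Function.update_eq_self]; exact .refl, h⟩
  · obtain ⟨_, hns⟩ := Classical.not_imp.1 h
    obtain ⟨y, ⟨hwy, hy⟩, z, ⟨hwz, hz⟩, hyz⟩ := Set.not_subsingleton_iff.1 hns
    have hcy := hc hwy
    have hcz := hc hwz
    have hcyz : c y = c z := by grind
    obtain ⟨j, hjw, hj⟩ := hc.exists_kempeEquiv_recolor hw hwy hwz hyz hcyz
    have hjy := hc.of_kempeEquiv hj hwy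
    rw [Function.update_self, Function.update_of_ne hwy.ne'] at hjy
    exact ⟨j, hj, by grind⟩

lemma update_comp_val (j : Fin k) :
    Function.update c w j ∘ (Subtype.val : ({w}ᶜ : Set V) → V) = c ∘ Subtype.val :=
  funext fun x => Function.update_of_ne x.2 _ _

lemma KempeStep.exists_comp_val_eq [Finite V] {d : ({w}ᶜ : Set V) → Fin k}
    (h : KempeStep (G.induce {w}ᶜ) k (c ∘ Subtype.val) d) (hc : IsProperColoring G k c)
    (hw : (G.neighborSet w).ncard < k) : ∃ e, KempeEquiv G k c e ∧ e ∘ Subtype.val = d := by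
  obtain ⟨a, b, S, hS, rfl⟩ := h.exists_kempeSwap
  obtain ⟨j, hj, hsub⟩ := hc.exists_kempeEquiv_subsingleton hw a b
  rw [← update_comp_val j] at hS ⊢
  have hcolor : ∀ y, G.Adj w y → Function.update c w j y = c y :=
    fun y hy => Function.update_of_ne hy.ne' _ _
  obtain ⟨T, hT, rfl⟩ := hS.exists_preimage_eq (w := w) (by
    rw [Function.update_self]
    exact fun h => (hsub h).anti fun y hy => ⟨hy.1, hcolor y hy.1 ▸ hy.2⟩)
  exact ⟨_, hj.trans hT.kempeEquiv_kempeSwap, kempeSwap_comp _⟩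

lemma KempeEquiv.exists_comp_val_eq [Finite V] {d : ({w}ᶜ : Set V) → Fin k}
    (h : KempeEquiv (G.induce {w}ᶜ) k (c ∘ Subtype.val) d) (hc : IsProperColoring G k c)
    (hw : (G.neighborSet w).ncard < k) : ∃ e, KempeEquiv G k c e ∧ e ∘ Subtype.val = d := by
  induction h with
  | refl => exact ⟨c, .refl, rfl⟩
  | tail _ hstep ih =>
    obtain ⟨e, he, rfl⟩ := ih
    obtain ⟨e', he', rfl⟩ := hstep.exists_comp_val_eq (hc.of_kempeEquiv he) hw
    exact ⟨e', he.trans he', rfl⟩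

lemma IsProperColoring.comp_val (hc : IsProperColoring G k c) (s : Set V) :
    IsProperColoring (G.induce s) k (c ∘ Subtype.val) :=
  fun _ _ hxy => hc hxy

theorem KempeClass.of_induce_compl_singleton [Finite V] (h : KempeClass (G.induce {w}ᶜ) k)
    (hw : (G.neighborSet w).ncard < k) : KempeClass G k := by
  intro c c' hc hc'
  obtain ⟨e, hce, he⟩ := (h _ _ (hc.comp_val _) (hc'.comp_val _)).exists_comp_val_eq hc hw
  have hec' : ∀ x, x ≠ w → e x = c' x := fun x hx => congrFun he ⟨x, hx⟩
  have hupdate : Function.update e w (c' w) = c' := by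
    funext x
    by_cases hx : x = w
    · rw [hx, Function.update_self]
    · rw [Function.update_of_ne hx, hec' x hx]
  have hfree : ∀ x, G.Adj w x → e x ≠ c' w := fun x hx => hec' x hx.ne' ▸ (hc' hx).symm
  exact hce.trans (hupdate ▸ (hc.of_kempeEquiv hce).kempeEquiv_update hfree)

lemma IsProperColoring.exists_of_induce_compl_singleton [Finite V] {c : ({w}ᶜ : Set V) → Fin k}
    (hc : IsProperColoring (G.induce {w}ᶜ) k c) (hw : (G.neighborSet w).ncard < k) :
    ∃ e, IsProperColoring G k e := by
  obtain ⟨j⟩ : Nonempty (Fin k) := ⟨0, hw.pos⟩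
  let e : V → Fin k := fun x => if hx : x = w then j else c ⟨x, hx⟩
  obtain ⟨i, hi⟩ := exists_color_ne_of_ncard_lt (c := e) ((Set.ncard_image_le).trans_lt hw)
  refine ⟨Function.update e w i, fun x y hxy => ?_⟩
  by_cases hx : x = w <;> by_cases hy : y = w
  · exact absurd (hx.trans hy.symm) hxy.ne
  · subst hx
    rw [Function.update_self, Function.update_of_ne hy]
    exact (hi y hxy).symm
  · subst hy
    rw [Function.update_self, Function.update_of_ne hx]
    exact hi x hxy.symm
  · rw [Function.update_of_ne hx, Function.update_of_ne hy]
    simpa only [e, dif_neg hx, dif_neg hy] using hc (u := ⟨x, hx⟩) (v := ⟨y, hy⟩) hxy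

lemma Degenerate.induce (hG : Degenerate G d) (s : Set V) : Degenerate (G.induce s) d := by
  intro T hT
  obtain ⟨_, ⟨v, hv, rfl⟩, hcard⟩ := hG (Subtype.val '' T) (hT.image _)
  refine ⟨v, hv, ?_⟩
  have himage : Subtype.val '' (T ∩ (G.induce s).neighborSet v) =
      Subtype.val '' T ∩ G.neighborSet v := by
    rw [← Set.image_inter_preimage]
    rfl
  rwa [← Set.ncard_image_of_injective _ Subtype.val_injective, himage]

theorem Degenerate.induction.{u}
    {motive : ∀ {V : Type u}, SimpleGraph V → Prop}
    (of_isEmpty : ∀ {V : Type u} [IsEmpty V] (G : SimpleGraph V), motive G)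
    (of_induce : ∀ {V : Type u} [Finite V] (G : SimpleGraph V) (w : V),
      (G.neighborSet w).ncard ≤ d → motive (G.induce {w}ᶜ) → motive G)
    {V : Type u} [Finite V] {G : SimpleGraph V} (hG : Degenerate G d) : motive G := by
  induction hn : Nat.card V using Nat.strong_induction_on generalizing V with
  | _ n ih =>
  cases isEmpty_or_nonempty V with
  | inl _ => exact of_isEmpty G
  | inr _ =>
    obtain ⟨w, -, hw⟩ := hG Set.univ Set.univ_nonempty
    rw [Set.univ_inter] at hw
    have hlt : Nat.card ({w}ᶜ : Set V) < n := by
      rw [← hn, Nat.card_coe_set_eq]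
      exact Set.ncard_lt_card (Set.compl_ne_univ.2 (Set.singleton_nonempty w))
    exact of_induce G w hw (ih _ hlt (hG.induce _) rfl)

theorem Degenerate.exists_isProperColoring [Finite V] (hG : Degenerate G d) (hd : d < k) :
    ∃ c, IsProperColoring G k c :=
  hG.induction (motive := fun G => ∃ c, IsProperColoring G k c)
    (fun _ => ⟨isEmptyElim, fun x => isEmptyElim x⟩)
    fun _ _ hw ⟨_, hc⟩ => hc.exists_of_induce_compl_singleton (hw.trans_lt hd)

-- Las Vergnas and Meyniel
theorem Degenerate.kempeClass [Finite V] (hG : Degenerate G d) (hd : d < k) : KempeClass G k :=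
  hG.induction (motive := fun G => KempeClass G k)
    (fun _ c c' _ _ => Subsingleton.elim c c' ▸ .refl)
    fun _ _ hw h => h.of_induce_compl_singleton (hw.trans_lt hd)

end Degenerate

section Identification

variable {W : Type*} {k d : ℕ} {G : SimpleGraph V} {f : V → W} {c c' : V → Fin k}

lemma IsProperColoring.of_comp {e : W → Fin k} (he : IsProperColoring G k (e ∘ f)) :
    IsProperColoring (G.map f) k e := by
  rintro _ _ ⟨-, x, y, hxy, rfl, rfl⟩
  exact he hxy

lemma IsProperColoring.comp {e : W → Fin k} (he : IsProperColoring (G.map f) k e)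
    (hf : ∀ x y, G.Adj x y → f x ≠ f y) : IsProperColoring G k (e ∘ f) :=
  fun x y hxy => he (map_adj_apply' hxy (hf x y hxy))

lemma Degenerate.kempeEquiv_of_factorsThrough [Finite V] [Finite W]
    (h : Degenerate (G.map f) d) (hd : d < k) (hf : ∀ x y, G.Adj x y → f x ≠ f y)
    (hc : IsProperColoring G k c) (hc' : IsProperColoring G k c')
    (hcf : c.FactorsThrough f) (hcf' : c'.FactorsThrough f) : KempeEquiv G k c c' := by
  have : Nonempty (Fin k) := ⟨0, hd.pos⟩
  obtain ⟨e, rfl⟩ := (Function.factorsThrough_iff c).1 hcf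
  obtain ⟨e', rfl⟩ := (Function.factorsThrough_iff c').1 hcf'
  let φ : G →g G.map f := ⟨f, fun hxy => map_adj_apply' hxy (hf _ _ hxy)⟩
  exact (h.kempeClass hd e e' hc.of_comp hc'.of_comp).comp_hom φ

lemma Degenerate.exists_isProperColoring_factorsThrough [Finite W]
    (h : Degenerate (G.map f) d) (hd : d < k) (hf : ∀ x y, G.Adj x y → f x ≠ f y) :
    ∃ c : V → Fin k, IsProperColoring G k c ∧ c.FactorsThrough f := by
  obtain ⟨e, he⟩ := h.exists_isProperColoring hd
  exact ⟨e ∘ f, he.comp hf, fun x y hxy => congrArg e hxy⟩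

-- At a vertex outside `T` all inequalities between degrees become equalities.
lemma exists_injOn_of_not_degenerate_map [Finite V] {T : Set V}
    (hG : ∀ v, (G.neighborSet v).ncard ≤ k) (hf : ∀ x ∉ T, ∀ y, f y = f x → y = x)
    (hT : (f '' T).ncard ≤ k) (h : ¬ Degenerate (G.map f) (k - 1)) :
    ∃ Z : Set V, Z.Nonempty ∧ Disjoint Z T ∧
      ∀ z ∈ Z, G.neighborSet z ⊆ Z ∪ T ∧ Set.InjOn f (G.neighborSet z) := by
  simp only [Degenerate, not_forall, not_exists, not_and, not_le] at h
  obtain ⟨S, ⟨v, hv⟩, hS⟩ := h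
  have hdeg : ∀ v ∈ S, k ≤ (S ∩ (G.map f).neighborSet v).ncard := fun v hv => by
    have := hS v hv
    omega
  have hSrange : S ⊆ Set.range f := by
    intro u hu
    obtain ⟨_, -, -, x, -, -, hx, -⟩ := Set.nonempty_of_ncard_ne_zero (hS u hu).ne_bot
    exact ⟨x, hx⟩
  have hcard : k < S.ncard := by
    refine (hdeg v hv).trans_lt (Set.ncard_lt_ncard ⟨Set.inter_subset_left, fun hsub => ?_⟩
      ((Set.finite_range f).subset hSrange))
    exact (G.map f).loopless.irrefl v (hsub hv).2
  refine ⟨f ⁻¹' S \ T, ?_, Set.disjoint_sdiff_left, fun z hz => ?_⟩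
  · by_contra hempty
    rw [Set.not_nonempty_iff_eq_empty, Set.sdiff_eq_empty] at hempty
    have hST : S ⊆ f '' T := Set.image_preimage_eq_of_subset hSrange ▸ Set.image_mono hempty
    exact hcard.not_ge ((Set.ncard_le_ncard hST (Set.toFinite T |>.image f)).trans hT)
  · have hsub : S ∩ (G.map f).neighborSet (f z) ⊆ f '' G.neighborSet z := by
      rintro _ ⟨-, -, x, y, hxy, hx, rfl⟩
      exact ⟨y, hf z hz.2 x hx ▸ hxy, rfl⟩
    have hge := (hG z).trans (hdeg (f z) hz.1)
    have hle : (f '' G.neighborSet z).ncard ≤ (G.neighborSet z).ncard := Set.ncard_image_le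
    have heq := Set.eq_of_subset_of_ncard_le hsub (hle.trans hge)
    rw [Set.sdiff_union_self]
    exact ⟨Set.subset_union_of_subset_left (Set.image_subset_iff.1 (heq ▸ Set.inter_subset_left)) T,
      Set.injOn_of_ncard_image_eq (hle.antisymm (heq ▸ hge))⟩

/-- The map identifying all vertices of `I` with `q`. It is used with `q ∈ I`. -/
noncomputable def identify (I : Set V) (q x : V) : V :=
  if x ∈ I then q else x

variable {I J D S : Set V} {q s x y : V}

lemma identify_of_mem (hx : x ∈ I) : identify I q x = q :=
  if_pos hx

lemma identify_of_notMem (hx : x ∉ I) : identify I q x = x :=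
  if_neg hx

lemma identify_eq_iff (hq : q ∈ I) (hx : x ∉ I) : identify I q y = x ↔ y = x := by
  grind [identify]

lemma eq_or_mem_of_identify_eq (h : identify I q x = identify I q y) (hq : q ∈ I) :
    x = y ∨ x ∈ I ∧ y ∈ I := by
  grind [identify]

lemma identify_ne_of_adj (hq : q ∈ I) (hI : G.IsIndepSet I) (hxy : G.Adj x y) :
    identify I q x ≠ identify I q y := by
  intro h
  obtain rfl | ⟨hx, hy⟩ := eq_or_mem_of_identify_eq h hq
  exacts [hxy.ne rfl, hI hx hy hxy.ne hxy]

lemma isIndepSet_pair {u v : V} (hadj : ¬ G.Adj u v) : G.IsIndepSet {u, v} := by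
  rintro x (rfl | rfl) y (rfl | rfl) hxy hadj'
  exacts [hxy rfl, hadj hadj', hadj hadj'.symm, hxy rfl]

lemma factorsThrough_identify_pair {α : Type*} {c : V → α} {u v : V} (h : c u = c v) :
    c.FactorsThrough (identify {u, v} u) := by
  intro x y hxy
  obtain rfl | ⟨rfl | rfl, rfl | rfl⟩ := eq_or_mem_of_identify_eq hxy (Set.mem_insert u {v})
  exacts [rfl, rfl, h, h.symm, rfl]

lemma identify_comp_eq_iff (hq : q ∈ I) (hs : s ∈ J) (hx : x ∉ I ∪ J) :
    (identify J s ∘ identify I q) y = x ↔ y = x := by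
  rw [Function.comp_apply, identify_eq_iff hs fun h => hx (.inr h),
    identify_eq_iff hq fun h => hx (.inl h)]

lemma identify_comp_of_mem_left (hx : x ∈ I) : (identify J s ∘ identify I q) x = identify J s q :=
  congrArg _ (identify_of_mem hx)

lemma identify_comp_of_mem_right (hIJ : Disjoint I J) (hx : x ∈ J) :
    (identify J s ∘ identify I q) x = s := by
  rw [Function.comp_apply, identify_of_notMem (hIJ.notMem_of_mem_right hx), identify_of_mem hx]

lemma identify_comp_ne_of_adj (hq : q ∈ I) (hs : s ∈ J) (hI : G.IsIndepSet I)
    (hJ : G.IsIndepSet J) (hIJ : Disjoint I J) (hxy : G.Adj x y) :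
    (identify J s ∘ identify I q) x ≠ (identify J s ∘ identify I q) y := by
  intro h
  have hmem {z : V} (hz : identify I q z ∈ J) : z ∈ J := by
    have hzI : z ∉ I := fun hzI =>
      hIJ.notMem_of_mem_left hq (by rwa [identify_of_mem hzI] at hz)
    rwa [identify_of_notMem hzI] at hz
  obtain h | ⟨hx, hy⟩ := eq_or_mem_of_identify_eq h hs
  · exact identify_ne_of_adj hq hI hxy h
  · exact hJ (hmem hx) (hmem hy) hxy.ne hxy

lemma exists_subsingleton_of_not_degenerate_map_identify_comp [Finite V]
    (hG : ∀ v, (G.neighborSet v).ncard ≤ k) (hk : 2 ≤ k) (hq : q ∈ I) (hs : s ∈ J)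
    (hIJ : Disjoint I J) (h : ¬ Degenerate (G.map (identify J s ∘ identify I q)) (k - 1)) :
    ∃ Z : Set V, Z.Nonempty ∧ Disjoint Z (I ∪ J) ∧ ∀ z ∈ Z, G.neighborSet z ⊆ Z ∪ (I ∪ J) ∧
      (G.neighborSet z ∩ I).Subsingleton ∧ (G.neighborSet z ∩ J).Subsingleton := by
  have hfib : ∀ x ∉ I ∪ J, ∀ y,
      (identify J s ∘ identify I q) y = (identify J s ∘ identify I q) x → y = x :=
    fun x hx y hy => (identify_comp_eq_iff hq hs hx).1
      (hy.trans ((identify_comp_eq_iff hq hs hx).2 rfl))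
  have himage : (identify J s ∘ identify I q) '' (I ∪ J) ⊆ {identify J s q, s} := by
    rintro _ ⟨x, hx | hx, rfl⟩
    exacts [.inl (identify_comp_of_mem_left hx), .inr (identify_comp_of_mem_right hIJ hx)]
  have hcard : ((identify J s ∘ identify I q) '' (I ∪ J)).ncard ≤ k :=
    ((Set.ncard_le_ncard himage).trans ((Set.ncard_insert_le _ _).trans (by simp))).trans hk
  obtain ⟨Z, hne, hdisj, hZ⟩ := exists_injOn_of_not_degenerate_map hG hfib hcard h
  refine ⟨Z, hne, hdisj, fun z hz => ⟨(hZ z hz).1, fun x hx y hy => ?_, fun x hx y hy => ?_⟩⟩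
  · exact (hZ z hz).2 hx.1 hy.1
      ((identify_comp_of_mem_left hx.2).trans (identify_comp_of_mem_left hy.2).symm)
  · exact (hZ z hz).2 hx.1 hy.1
      ((identify_comp_of_mem_right hIJ hx.2).trans (identify_comp_of_mem_right hIJ hy.2).symm)

/-- `D` obstructs the identification of the vertices of `I` to a single one: no edge leaves `D ∪ I`
from `D`, and no vertex of `D` loses a neighbor by the identification. -/
structure IsObstruction (G : SimpleGraph V) (I D : Set V) : Prop where
  nonempty : D.Nonempty
  disjoint : Disjoint D I
  neighborSet_subset : ∀ x ∈ D, G.neighborSet x ⊆ D ∪ I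
  subsingleton : ∀ x ∈ D, (G.neighborSet x ∩ I).Subsingleton

lemma exists_isObstruction_of_not_degenerate [Finite V] (hG : ∀ v, (G.neighborSet v).ncard ≤ k)
    (hk : 0 < k) (hq : q ∈ I) (h : ¬ Degenerate (G.map (identify I q)) (k - 1)) :
    ∃ D, IsObstruction G I D := by
  have hfib : ∀ x ∉ I, ∀ y, identify I q y = identify I q x → y = x := fun x hx y hy => by
    rwa [identify_of_notMem hx, identify_eq_iff hq hx] at hy
  have himage : identify I q '' I ⊆ {q} := by
    rintro _ ⟨x, hx, rfl⟩
    exact identify_of_mem hx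
  obtain ⟨D, hne, hdisj, hD⟩ := exists_injOn_of_not_degenerate_map hG hfib
    ((Set.ncard_le_ncard himage).trans (by rwa [Set.ncard_singleton])) h
  refine ⟨D, hne, hdisj, fun x hx => (hD x hx).1, fun x hx y hy z hz => ?_⟩
  exact (hD x hx).2 hy.1 hz.1 ((identify_of_mem hy.2).trans (identify_of_mem hz.2).symm)

lemma mem_of_preconnected_induce_compl (hS : (G.induce Sᶜ).Preconnected)
    (hD : ∀ d ∈ D, G.neighborSet d ⊆ D ∪ S) (hx : x ∈ D) (hxS : x ∉ S) (hyS : y ∉ S) : y ∈ D := by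
  obtain ⟨p⟩ := hS ⟨x, hxS⟩ ⟨y, hyS⟩
  by_contra hy
  obtain ⟨e, -, he, he'⟩ := p.exists_boundary_dart (Subtype.val ⁻¹' D) hx hy
  exact (hD _ he e.adj).elim he' e.snd.2

end Identification

/-- The properties of a `3`-connected `k`-regular graph of diameter `2` with `k ≥ 4` on which the
argument rests. The bound on the number of vertices rules out the complete graph. -/
structure IsDiamTwoRegular (G : SimpleGraph V) (k : ℕ) : Prop where
  four_le : 4 ≤ k
  ncard_neighborSet : ∀ v, (G.neighborSet v).ncard = k
  preconnected : ∀ S : Set V, S.ncard ≤ 2 → (G.induce Sᶜ).Preconnected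
  commonNeighbors_nonempty : ∀ u v, u ≠ v → ¬ G.Adj u v → (G.commonNeighbors u v).Nonempty
  lt_card : k + 1 < Nat.card V

section Obstruction

variable {k : ℕ} {G : SimpleGraph V} {I D : Set V} {c c' : V → Fin k}

theorem IsDiamTwoRegular.degenerate_map_identify_pair [Finite V] (hG : IsDiamTwoRegular G k)
    {u v : V} (huv : u ≠ v) (hadj : ¬ G.Adj u v) :
    Degenerate (G.map (identify {u, v} u)) (k - 1) := by
  by_contra h
  obtain ⟨D, hD⟩ := exists_isObstruction_of_not_degenerate (fun v => (hG.ncard_neighborSet v).le)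
    (by have := hG.four_le; omega) (Set.mem_insert u {v}) h
  obtain ⟨x, hx⟩ := hD.nonempty
  obtain ⟨w, huw, hvw⟩ := hG.commonNeighbors_nonempty u v huv hadj
  have hw : w ∉ ({u, v} : Set V) := by
    rintro (rfl | rfl)
    exacts [G.loopless.irrefl w huw, G.loopless.irrefl w hvw]
  have hwD : w ∈ D := mem_of_preconnected_induce_compl
    (hG.preconnected {u, v} (Set.ncard_insert_le u {v} |>.trans (by simp)))
    hD.neighborSet_subset hx (hD.disjoint.notMem_of_mem_left hx) hw
  exact huv (hD.subsingleton w hwD ⟨huw.symm, .inl rfl⟩ ⟨hvw.symm, .inr rfl⟩)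

theorem IsDiamTwoRegular.kempeEquiv_of_eq [Finite V] (hG : IsDiamTwoRegular G k)
    {u v : V} (huv : u ≠ v) (hc : IsProperColoring G k c) (hc' : IsProperColoring G k c')
    (h : c u = c v) (h' : c' u = c' v) : KempeEquiv G k c c' := by
  have hadj : ¬ G.Adj u v := fun hadj => hc hadj h
  exact (hG.degenerate_map_identify_pair huv hadj).kempeEquiv_of_factorsThrough
    (by have := hG.four_le; omega)
    (fun x y => identify_ne_of_adj (Set.mem_insert u {v}) (isIndepSet_pair hadj)) hc hc'
    (factorsThrough_identify_pair h) (factorsThrough_identify_pair h')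

lemma IsDiamTwoRegular.exists_isProperColoring_eq [Finite V] (hG : IsDiamTwoRegular G k)
    {u v : V} (huv : u ≠ v) (hadj : ¬ G.Adj u v) :
    ∃ c : V → Fin k, IsProperColoring G k c ∧ c u = c v := by
  obtain ⟨c, hc, hcf⟩ := (hG.degenerate_map_identify_pair huv
    hadj).exists_isProperColoring_factorsThrough (k := k) (by have := hG.four_le; omega)
    (fun x y => identify_ne_of_adj (Set.mem_insert u {v}) (isIndepSet_pair hadj))
  exact ⟨c, hc, hcf (by rw [identify_of_mem (.inl rfl), identify_of_mem (.inr rfl)])⟩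

namespace IsObstruction

lemma exists_mem_commonNeighbors (hD : IsObstruction G I D) (hG : IsDiamTwoRegular G k) {d e : V}
    (hd : d ∈ D) (he : e ∉ D ∪ I) : ∃ t ∈ I, G.Adj d t ∧ G.Adj e t := by
  obtain ⟨t, hdt, het⟩ := hG.commonNeighbors_nonempty d e (fun h => he (.inl (h ▸ hd)))
    fun hde => he (hD.neighborSet_subset d hd hde)
  refine ⟨t, (hD.neighborSet_subset d hd hdt).resolve_left fun htD => ?_, hdt, het⟩
  exact he (hD.neighborSet_subset t htD het.symm)

lemma exists_notMem (hD : IsObstruction G I D) (hG : IsDiamTwoRegular G k) (hI : G.IsIndepSet I)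
    (hI' : I.Nontrivial) : ∃ e, e ∉ D ∪ I := by
  obtain ⟨q, hq, r, hr, hqr⟩ := hI'
  obtain ⟨e, hqe, hre⟩ := hG.commonNeighbors_nonempty q r hqr (hI hq hr hqr)
  refine ⟨e, ?_⟩
  rintro (heD | heI)
  · exact hqr (hD.subsingleton e heD ⟨hqe.symm, hq⟩ ⟨hre.symm, hr⟩)
  · exact hI hq heI hqe.ne hqe

lemma disjoint_pair {s s' : V} (hD : IsObstruction G I D) (hs : s ∈ D) (hs' : s' ∈ D) :
    Disjoint I {s, s'} :=
  (hD.disjoint.mono_left (Set.pair_subset hs hs')).symm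

section Finite

variable [Finite V]

lemma exists_adj (hD : IsObstruction G I D) (hG : IsDiamTwoRegular G k) (hI : I.ncard ≤ 3) {t : V}
    (ht : t ∈ I) : ∃ d ∈ D, G.Adj d t := by
  by_contra! hno
  have hS : (I \ {t}).ncard ≤ 2 := by
    have := Set.ncard_sdiff_singleton_add_one ht
    omega
  have hclosed : ∀ d ∈ D, G.neighborSet d ⊆ D ∪ I \ {t} := fun d hd y hdy =>
    (hD.neighborSet_subset d hd hdy).imp_right fun hyI => ⟨hyI, by rintro rfl; exact hno d hd hdy⟩
  obtain ⟨d, hd⟩ := hD.nonempty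
  exact hD.disjoint.notMem_of_mem_right ht (mem_of_preconnected_induce_compl
    (hG.preconnected _ hS) hclosed hd (fun h => hD.disjoint.notMem_of_mem_left hd h.1)
    fun h => h.2 rfl)

lemma adj_of_notMem (hD : IsObstruction G I D) (hG : IsDiamTwoRegular G k) (hI : I.ncard ≤ 3)
    {e t : V} (he : e ∉ D ∪ I) (ht : t ∈ I) : G.Adj e t := by
  obtain ⟨d, hd, hdt⟩ := hD.exists_adj hG hI ht
  obtain ⟨t', ht', hdt', het'⟩ := hD.exists_mem_commonNeighbors hG hd he
  rwa [hD.subsingleton d hd ⟨hdt, ht⟩ ⟨hdt', ht'⟩]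

lemma le_ncard_compl (hD : IsObstruction G I D) (hG : IsDiamTwoRegular G k) (hI : G.IsIndepSet I)
    (hI' : I.Nontrivial) : k + 1 ≤ (D ∪ I)ᶜ.ncard + I.ncard := by
  obtain ⟨e, he⟩ := hD.exists_notMem hG hI hI'
  have hsub : G.neighborSet e ⊆ ((D ∪ I)ᶜ \ {e}) ∪ I := by
    intro y hy
    by_cases hyI : y ∈ I
    · exact .inr hyI
    · have hyD : y ∉ D := fun hyD => he (hD.neighborSet_subset y hyD hy.symm)
      exact .inl ⟨fun h => h.elim hyD hyI, hy.ne'⟩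
  have hcard := (Set.ncard_le_ncard hsub).trans (Set.ncard_union_le _ _)
  have := Set.ncard_sdiff_singleton_add_one (s := (D ∪ I)ᶜ) he
  rw [hG.ncard_neighborSet] at hcard
  omega

lemma ncard_neighborSet_inter_le (hD : IsObstruction G I D) (hG : IsDiamTwoRegular G k)
    (hI : G.IsIndepSet I) (hI' : I.Nontrivial) (hI₃ : I.ncard ≤ 3) {t : V} (ht : t ∈ I) :
    (G.neighborSet t ∩ D).ncard ≤ 2 := by
  have hsub : (D ∪ I)ᶜ ∪ G.neighborSet t ∩ D ⊆ G.neighborSet t :=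
    Set.union_subset (fun e he => (hD.adj_of_notMem hG hI₃ he ht).symm) Set.inter_subset_left
  have hdisj : Disjoint (D ∪ I)ᶜ (G.neighborSet t ∩ D) :=
    Set.disjoint_left.2 fun e he he' => he (.inl he'.2)
  have hcard := Set.ncard_le_ncard hsub
  rw [Set.ncard_union_eq hdisj, hG.ncard_neighborSet] at hcard
  have := hD.le_ncard_compl hG hI hI'
  omega

lemma ncard_le_six (hD : IsObstruction G I D) (hG : IsDiamTwoRegular G k)
    (hI : G.IsIndepSet I) (hI₃ : I.ncard = 3) : D.ncard ≤ 6 := by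
  have hI' : I.Nontrivial := Set.one_lt_ncard_iff_nontrivial.1 (by omega)
  obtain ⟨e, he⟩ := hD.exists_notMem hG hI hI'
  have hbound {t : V} (ht : t ∈ I) := hD.ncard_neighborSet_inter_le hG hI hI' hI₃.le ht
  have hsub : ∀ d ∈ D, ∃ t ∈ I, d ∈ G.neighborSet t ∩ D := fun d hd =>
    let ⟨t, ht, hdt, _⟩ := hD.exists_mem_commonNeighbors hG hd he
    ⟨t, ht, hdt.symm, hd⟩
  obtain ⟨q, r, p, -, -, -, rfl⟩ := Set.ncard_eq_three.1 hI₃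
  have hD' : D ⊆ (G.neighborSet q ∩ D ∪ G.neighborSet r ∩ D) ∪ G.neighborSet p ∩ D := by
    intro d hd
    obtain ⟨t, rfl | rfl | rfl, hdt⟩ := hsub d hd
    exacts [.inl (.inl hdt), .inl (.inr hdt), .inr hdt]
  calc D.ncard ≤ _ := Set.ncard_le_ncard hD'
    _ ≤ _ := Set.ncard_union_le _ _
    _ ≤ _ := Nat.add_le_add_right (Set.ncard_union_le _ _) _
    _ ≤ 2 + 2 + 2 := by gcongr <;> exact hbound (by simp)

lemma le_ncard_neighborSet_inter (hD : IsObstruction G I D) (hG : IsDiamTwoRegular G k) {d : V}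
    (hd : d ∈ D) : k ≤ (G.neighborSet d ∩ D).ncard + 1 :=
  calc k = (G.neighborSet d).ncard := (hG.ncard_neighborSet d).symm
    _ = (G.neighborSet d ∩ D ∪ G.neighborSet d ∩ I).ncard := by
      rw [← Set.inter_union_distrib_left, Set.inter_eq_left.2 (hD.neighborSet_subset d hd)]
    _ ≤ (G.neighborSet d ∩ D).ncard + (G.neighborSet d ∩ I).ncard := Set.ncard_union_le _ _
    _ ≤ (G.neighborSet d ∩ D).ncard + 1 := by
      gcongr
      exact Set.ncard_le_one_iff_subsingleton.2 (hD.subsingleton d hd)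

section Nonadjacent

variable {q s s' : V}

lemma ncard_sdiff_neighborSet_le_one (hD : IsObstruction G I D) (hG : IsDiamTwoRegular G k)
    (hI : G.IsIndepSet I) (hI₃ : I.ncard = 3) (hs : s ∈ D) (hs' : s' ∈ D) (hne : s ≠ s')
    (hadj : ¬ G.Adj s s') : ((D \ {s, s'}) \ G.neighborSet s).ncard ≤ 1 := by
  have hD' := Set.ncard_sdiff (s := {s, s'}) (t := D) (by grind)
  rw [Set.ncard_pair hne] at hD'
  have hsub : G.neighborSet s ∩ D ⊆ (D \ {s, s'}) ∩ G.neighborSet s := fun y hy =>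
    ⟨⟨hy.2, by rintro (rfl | rfl); exacts [G.loopless.irrefl y hy.1, hadj hy.1]⟩, hy.1⟩
  have hle := Set.ncard_le_ncard hsub
  have hsplit := Set.ncard_inter_add_ncard_sdiff_eq_ncard (D \ {s, s'}) (G.neighborSet s)
  have := hD.le_ncard_neighborSet_inter hG hs
  have := hD.ncard_le_six hG hI hI₃
  have := hG.four_le
  omega

lemma eq_empty_of_subset_sdiff_pair (hD : IsObstruction G I D) (hG : IsDiamTwoRegular G k)
    (hI : G.IsIndepSet I) (hI₃ : I.ncard = 3) (hs : s ∈ D) (hs' : s' ∈ D) (hne : s ≠ s')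
    (hadj : ¬ G.Adj s s') {Z : Set V} (hZ : Z ⊆ D \ {s, s'})
    (hsub : ∀ z ∈ Z, G.neighborSet z ∩ D ⊆ Z ∪ {s, s'})
    (hsubs : ∀ z ∈ Z, (G.neighborSet z ∩ {s, s'}).Subsingleton) : Z = ∅ := by
  by_contra! hempty
  obtain ⟨z, hz⟩ := hempty
  have hlower : k ≤ Z.ncard + 1 := by
    have hN : G.neighborSet z ∩ D ⊆ (Z \ {z}) ∪ (G.neighborSet z ∩ {s, s'}) := fun y hy =>
      (hsub z hz hy).imp (fun hyZ => ⟨hyZ, hy.1.ne'⟩) fun hys => ⟨hy.1, hys⟩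
    have hle := (Set.ncard_le_ncard hN).trans (Set.ncard_union_le _ _)
    have := Set.ncard_le_one_iff_subsingleton.2 (hsubs z hz)
    have := Set.ncard_sdiff_singleton_add_one hz
    have := hD.le_ncard_neighborSet_inter hG (hZ hz).1
    omega
  have hupper : Z.ncard ≤ 2 := by
    have hmiss : Z ⊆ ((D \ {s, s'}) \ G.neighborSet s) ∪ ((D \ {s, s'}) \ G.neighborSet s') := by
      intro y hy
      by_cases hsy : G.Adj s y
      · exact .inr ⟨hZ hy, fun hs'y =>
          hne (hsubs y hy ⟨hsy.symm, .inl rfl⟩ ⟨Adj.symm hs'y, .inr rfl⟩)⟩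
      · exact .inl ⟨hZ hy, hsy⟩
    have hle := (Set.ncard_le_ncard hmiss).trans (Set.ncard_union_le _ _)
    have := hD.ncard_sdiff_neighborSet_le_one hG hI hI₃ hs hs' hne hadj
    have := hD.ncard_sdiff_neighborSet_le_one hG hI hI₃ hs' hs hne.symm fun h => hadj h.symm
    rw [Set.pair_comm] at this
    omega
  have := hG.four_le
  omega

theorem degenerate_map_identify (hD : IsObstruction G I D) (hG : IsDiamTwoRegular G k)
    (hI : G.IsIndepSet I) (hI₃ : I.ncard = 3) (hq : q ∈ I) (hs : s ∈ D) (hs' : s' ∈ D)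
    (hne : s ≠ s') (hadj : ¬ G.Adj s s') :
    Degenerate (G.map (identify {s, s'} s ∘ identify I q)) (k - 1) := by
  by_contra h
  obtain ⟨Z, hZne, hdisj, hZ⟩ := exists_subsingleton_of_not_degenerate_map_identify_comp
    (fun v => (hG.ncard_neighborSet v).le) (by have := hG.four_le; omega) hq
    (Set.mem_insert s {s'}) (hD.disjoint_pair hs hs') h
  refine hZne.ne_empty (hD.eq_empty_of_subset_sdiff_pair hG hI hI₃ hs hs' hne hadj
    (fun z hz => ⟨by_contra fun hzD => ?_, ?_⟩) (fun z hz y hy => ?_) fun z hz => (hZ z hz).2.2)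
  · have hzI : z ∉ D ∪ I := fun h => h.elim hzD fun hzI => hdisj.notMem_of_mem_left hz (.inl hzI)
    obtain ⟨t, ht, t', ht', htt'⟩ : I.Nontrivial :=
      Set.one_lt_ncard_iff_nontrivial.1 (hI₃ ▸ by norm_num)
    exact htt' ((hZ z hz).2.1 ⟨hD.adj_of_notMem hG hI₃.le hzI ht, ht⟩
      ⟨hD.adj_of_notMem hG hI₃.le hzI ht', ht'⟩)
  · exact fun hzs => hdisj.notMem_of_mem_left hz (.inr hzs)
  · obtain hyZ | hyI | hys := (hZ z hz).1 hy.1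
    exacts [.inl hyZ, absurd hyI (hD.disjoint.notMem_of_mem_left hy.2), .inr hys]

end Nonadjacent

end Finite

end IsObstruction

theorem IsDiamTwoRegular.exists_isProperColoring_triple [Finite V] (hG : IsDiamTwoRegular G k)
    {p q r s s' : V} (hqr : q ≠ r) (hqp : q ≠ p) (hrp : r ≠ p) (hI : G.IsIndepSet {q, r, p})
    (hc : IsProperColoring G k c) (hqs : G.Adj q s) (hrs' : G.Adj r s') (hs : c s = c p)
    (hs' : c s' = c p) : ∃ e : V → Fin k, IsProperColoring G k e ∧ e q = e r ∧ e q = e p := by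
  have hk : k - 1 < k := by have := hG.four_le; omega
  have hqI : q ∈ ({q, r, p} : Set V) := .inl rfl
  have hrI : r ∈ ({q, r, p} : Set V) := .inr (.inl rfl)
  have hpI : p ∈ ({q, r, p} : Set V) := .inr (.inr rfl)
  by_cases hdeg : Degenerate (G.map (identify {q, r, p} q)) (k - 1)
  · obtain ⟨e, he, hef⟩ := hdeg.exists_isProperColoring_factorsThrough hk
      fun x y => identify_ne_of_adj hqI hI
    exact ⟨e, he, hef (by simp only [identify_of_mem, hqI, hrI]),
      hef (by simp only [identify_of_mem, hqI, hpI])⟩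
  obtain ⟨D, hD⟩ := exists_isObstruction_of_not_degenerate (fun v => (hG.ncard_neighborSet v).le)
    hk.pos hqI hdeg
  have hI₃ : ({q, r, p} : Set V).ncard = 3 := Set.ncard_eq_three.2 ⟨q, r, p, hqr, hqp, hrp, rfl⟩
  have hmem {t x : V} (ht : t ∈ ({q, r, p} : Set V)) (htx : G.Adj t x) (hx : c x = c p) :
      x ∈ D := by
    by_contra hxD
    have hxI : x ∉ ({q, r, p} : Set V) := fun hxI => hI ht hxI htx.ne htx
    exact hc (hD.adj_of_notMem hG hI₃.le (fun h => h.elim hxD hxI) hpI) hx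
  have hsD := hmem hqI hqs hs
  have hs'D := hmem hrI hrs' hs'
  have hne : s ≠ s' := by
    rintro rfl
    exact hqr (hD.subsingleton s hsD ⟨hqs.symm, hqI⟩ ⟨hrs'.symm, hrI⟩)
  have hadj : ¬ G.Adj s s' := fun hss' => hc hss' (hs.trans hs'.symm)
  obtain ⟨e, he, hef⟩ := (hD.degenerate_map_identify hG hI hI₃ hqI hsD hs'D hne
    hadj).exists_isProperColoring_factorsThrough hk
    fun x y => identify_comp_ne_of_adj hqI (Set.mem_insert s {s'}) hI (isIndepSet_pair hadj)
      (hD.disjoint_pair hsD hs'D)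
  exact ⟨e, he,
    hef ((identify_comp_of_mem_left hqI).trans (identify_comp_of_mem_left hrI).symm),
    hef ((identify_comp_of_mem_left hqI).trans (identify_comp_of_mem_left hpI).symm)⟩

end Obstruction

section KempeSplit

/-- A partition of the proper `k`-colourings of `G` into two nonempty sets, each a union of
Kempe classes. -/
structure KempeSplit (G : SimpleGraph V) (k : ℕ) (A B : Set (V → Fin k)) : Prop where
  union_eq : A ∪ B = {c | IsProperColoring G k c}
  disjoint : Disjoint A B
  nonempty_left : A.Nonempty
  nonempty_right : B.Nonempty
  mem_left_of_kempeEquiv : ∀ c ∈ A, ∀ c', KempeEquiv G k c c' → c' ∈ A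
  mem_right_of_kempeEquiv : ∀ c ∈ B, ∀ c', KempeEquiv G k c c' → c' ∈ B

/-- The vertices `u` and `v` are distinct and some colouring in `A` gives them the same colour.
For a `KempeSplit` into `A` and `B` this colours each edge of the complement of `G` either red
(`Coincide A`) or blue (`Coincide B`). -/
def Coincide {α : Type*} (A : Set (V → α)) (u v : V) : Prop :=
  u ≠ v ∧ ∃ c ∈ A, c u = c v

variable {k : ℕ} {G : SimpleGraph V} {A B : Set (V → Fin k)} {c : V → Fin k} {u v a b : V}

lemma Coincide.symm (h : Coincide A u v) : Coincide A v u :=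
  ⟨h.1.symm, h.2.imp fun _ hc => ⟨hc.1, hc.2.symm⟩⟩

lemma exists_ncard_fiber_lt [Finite V] {m : ℕ} (c : V → Fin k) (h : Nat.card V < k * m) :
    ∃ j, (c ⁻¹' {j}).ncard < m := by
  have := Fintype.ofFinite V
  obtain ⟨j, hj⟩ := Fintype.exists_card_fiber_lt_of_card_lt_mul (f := c) (n := m)
    (by rwa [Fintype.card_fin, ← Nat.card_eq_fintype_card])
  exact ⟨j, by rwa [← Set.ncard_coe_finset, Finset.coe_filter_univ] at hj⟩

lemma kempeSplit_of_not_kempeEquiv [Finite V] {c c' : V → Fin k} (hc : IsProperColoring G k c)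
    (hc' : IsProperColoring G k c') (h : ¬ KempeEquiv G k c c') :
    KempeSplit G k {x | KempeEquiv G k c x}
      {x | IsProperColoring G k x ∧ ¬ KempeEquiv G k c x} where
  union_eq := Set.ext fun _ => ⟨fun hx => hx.elim hc.of_kempeEquiv And.left,
    fun hx => (em _).imp_right fun hcx => ⟨hx, hcx⟩⟩
  disjoint := Set.disjoint_left.2 fun _ hx hx' => hx'.2 hx
  nonempty_left := ⟨c, .refl⟩
  nonempty_right := ⟨c', hc', h⟩
  mem_left_of_kempeEquiv _ hx _ hxy := hx.trans hxy
  mem_right_of_kempeEquiv _ hx _ hxy :=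
    ⟨hx.1.of_kempeEquiv hxy, fun hcy => hx.2 (hcy.trans hxy.symm)⟩

namespace KempeSplit

lemma symm (hS : KempeSplit G k A B) : KempeSplit G k B A where
  union_eq := Set.union_comm A B ▸ hS.union_eq
  disjoint := hS.disjoint.symm
  nonempty_left := hS.nonempty_right
  nonempty_right := hS.nonempty_left
  mem_left_of_kempeEquiv := hS.mem_right_of_kempeEquiv
  mem_right_of_kempeEquiv := hS.mem_left_of_kempeEquiv

lemma mem_or_mem (hS : KempeSplit G k A B) (hc : IsProperColoring G k c) : c ∈ A ∨ c ∈ B :=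
  hS.union_eq.ge hc

lemma isProperColoring (hS : KempeSplit G k A B) (hc : c ∈ A) : IsProperColoring G k c :=
  hS.union_eq.le (.inl hc)

lemma not_adj (hS : KempeSplit G k A B) (h : Coincide A u v) : ¬ G.Adj u v := by
  obtain ⟨-, c, hc, huv⟩ := h
  exact fun hadj => hS.isProperColoring hc hadj huv

section Finite

variable [Finite V]

lemma mem_of_eq (hS : KempeSplit G k A B) (hG : IsDiamTwoRegular G k) (h : Coincide A u v)
    (hc : IsProperColoring G k c) (hcuv : c u = c v) : c ∈ A := by
  obtain ⟨huv, d, hd, hduv⟩ := h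
  exact hS.mem_left_of_kempeEquiv d hd c
    (hG.kempeEquiv_of_eq huv (hS.isProperColoring hd) hc hduv hcuv)

lemma not_coincide (hS : KempeSplit G k A B) (hG : IsDiamTwoRegular G k) (h : Coincide A u v) :
    ¬ Coincide B u v := fun ⟨_, _, hc, hcuv⟩ =>
  hS.disjoint.notMem_of_mem_right hc (hS.mem_of_eq hG h (hS.symm.isProperColoring hc) hcuv)

lemma coincide_or_coincide (hS : KempeSplit G k A B) (hG : IsDiamTwoRegular G k) (huv : u ≠ v)
    (hadj : ¬ G.Adj u v) : Coincide A u v ∨ Coincide B u v := by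
  obtain ⟨c, hc, hcuv⟩ := hG.exists_isProperColoring_eq huv hadj
  exact (hS.mem_or_mem hc).imp (fun hA => ⟨huv, c, hA, hcuv⟩) fun hB => ⟨huv, c, hB, hcuv⟩

-- Otherwise `v` could be recoloured with the colour of `b`.
lemma exists_adj_eq (hS : KempeSplit G k A B) (hG : IsDiamTwoRegular G k) (hc : c ∈ A)
    (h : Coincide B v b) : ∃ y, G.Adj v y ∧ c y = c b := by
  by_contra! hno
  have hmem := hS.mem_left_of_kempeEquiv c hc _
    ((hS.isProperColoring hc).kempeEquiv_update (v := v) hno)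
  refine hS.disjoint.notMem_of_mem_left hmem
    (hS.symm.mem_of_eq hG h (hS.isProperColoring hmem) ?_)
  rw [Function.update_self, Function.update_of_ne h.1.symm]

lemma exists_ne_eq_of_coincide (hS : KempeSplit G k A B) (hG : IsDiamTwoRegular G k)
    (hc : c ∈ A) (h : Coincide B v b) : ∃ y ≠ v, c y = c v := by
  obtain ⟨y, hby, hcy⟩ := hS.exists_adj_eq hG hc h.symm
  exact ⟨y, by rintro rfl; exact hS.symm.not_adj h hby.symm, hcy⟩

lemma exists_coincide (hS : KempeSplit G k A B) (hG : IsDiamTwoRegular G k) (v : V) :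
    ∃ a, Coincide A v a := by
  obtain ⟨b, hb⟩ : ∃ b, b ∉ insert v (G.neighborSet v) := by
    by_contra! hall
    have hcard := Set.ncard_insert_le v (G.neighborSet v)
    rw [Set.eq_univ_of_forall hall, Set.ncard_univ, hG.ncard_neighborSet] at hcard
    exact hcard.not_gt hG.lt_card
  obtain h | h := hS.coincide_or_coincide hG (fun hvb => hb (.inl hvb.symm)) fun h => hb (.inr h)
  · exact ⟨b, h⟩
  · obtain ⟨c, hc⟩ := hS.nonempty_left
    obtain ⟨y, hyv, hcy⟩ := hS.exists_ne_eq_of_coincide hG hc h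
    exact ⟨y, hyv.symm, c, hc, hcy.symm⟩

lemma exists_ne_eq (hS : KempeSplit G k A B) (hG : IsDiamTwoRegular G k)
    (hc : IsProperColoring G k c) (v : V) : ∃ y ≠ v, c y = c v := by
  obtain hA | hB := hS.mem_or_mem hc
  · obtain ⟨b, hb⟩ := hS.symm.exists_coincide hG v
    exact hS.exists_ne_eq_of_coincide hG hA hb
  · obtain ⟨a, ha⟩ := hS.exists_coincide hG v
    exact hS.symm.exists_ne_eq_of_coincide hG hB ha

lemma one_lt_ncard_fiber (hS : KempeSplit G k A B) (hG : IsDiamTwoRegular G k)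
    (hc : IsProperColoring G k c) (j : Fin k) : 1 < (c ⁻¹' {j}).ncard := by
  have hused : ∃ v, c v = j := by
    by_contra! hno
    obtain ⟨⟨v⟩, -⟩ := Nat.card_pos_iff.1 (Nat.zero_lt_of_lt hG.lt_card)
    have hd := hc.of_kempeEquiv (hc.kempeEquiv_update (v := v) fun y _ => hno y)
    obtain ⟨y, hyv, hy⟩ := hS.exists_ne_eq hG hd v
    rw [Function.update_self, Function.update_of_ne hyv] at hy
    exact hno y hy
  obtain ⟨v, rfl⟩ := hused
  obtain ⟨y, hyv, hy⟩ := hS.exists_ne_eq hG hc v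
  exact Set.one_lt_ncard_iff_nontrivial.2 ⟨v, rfl, y, hy, hyv.symm⟩

lemma false_of_coincide_triangle (hS : KempeSplit G k A B) (hG : IsDiamTwoRegular G k) {p q r : V}
    (hqr : Coincide A q r) (hqp : Coincide B q p) (hrp : Coincide B r p) : False := by
  obtain ⟨c, hc, -⟩ := hqr.2
  obtain ⟨s, hqs, hs⟩ := hS.exists_adj_eq hG hc hqp
  obtain ⟨s', hrs', hs'⟩ := hS.exists_adj_eq hG hc hrp
  have hI : G.IsIndepSet {q, r, p} := by
    have := hS.not_adj hqr
    have := hS.symm.not_adj hqp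
    have := hS.symm.not_adj hrp
    intro x hx y hy hxy
    grind [G.adj_comm]
  obtain ⟨e, he, heqr, heqp⟩ := hG.exists_isProperColoring_triple hqr.1 hqp.1 hrp.1 hI
    (hS.isProperColoring hc) hqs hrs' hs hs'
  exact hS.disjoint.notMem_of_mem_left (hS.mem_of_eq hG hqr he heqr)
    (hS.symm.mem_of_eq hG hqp he heqp)

lemma adj_of_coincide (hS : KempeSplit G k A B) (hG : IsDiamTwoRegular G k)
    (ha : Coincide A u a) (hb : Coincide B u b) : G.Adj a b := by
  by_contra hab
  have hne : a ≠ b := by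
    rintro rfl
    exact hS.not_coincide hG ha hb
  obtain h | h := hS.coincide_or_coincide hG hne hab
  · exact hS.symm.false_of_coincide_triangle hG hb ha h.symm
  · exact hS.false_of_coincide_triangle hG ha hb h

lemma ncard_coincide_lt (hS : KempeSplit G k A B) (hG : IsDiamTwoRegular G k) (u : V) :
    {a | Coincide A u a}.ncard < k := by
  obtain ⟨b, hb⟩ := hS.symm.exists_coincide hG u
  obtain ⟨w, huw, hbw⟩ := hG.commonNeighbors_nonempty u b hb.1 (hS.symm.not_adj hb)
  have hssub : {a | Coincide A u a} ⊂ G.neighborSet b :=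
    ⟨fun a ha => (hS.adj_of_coincide hG ha hb).symm, fun h => hS.not_adj (h hbw) huw⟩
  exact (Set.ncard_lt_ncard hssub).trans_eq (hG.ncard_neighborSet b)

lemma card_le (hS : KempeSplit G k A B) (hG : IsDiamTwoRegular G k) (u : V) :
    Nat.card V ≤ k + 1 + {a | Coincide A u a}.ncard + {b | Coincide B u b}.ncard := by
  have hcover : (Set.univ : Set V) ⊆
      insert u (G.neighborSet u) ∪ {a | Coincide A u a} ∪ {b | Coincide B u b} := by
    intro y _
    by_cases hy : y ∈ insert u (G.neighborSet u)
    · exact .inl (.inl hy)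
    · have huy : u ≠ y := fun h => hy (.inl h.symm)
      exact (hS.coincide_or_coincide hG huy fun h => hy (.inr h)).imp_left .inr
  calc Nat.card V = (Set.univ : Set V).ncard := (Set.ncard_univ V).symm
    _ ≤ _ := Set.ncard_le_ncard hcover
    _ ≤ _ := Set.ncard_union_le _ _
    _ ≤ _ := Nat.add_le_add_right (Set.ncard_union_le _ _) _
    _ ≤ _ := by
      gcongr
      exact hG.ncard_neighborSet u ▸ Set.ncard_insert_le u _

lemma two_mul_le_card (hS : KempeSplit G k A B) (hG : IsDiamTwoRegular G k) :
    k * 2 ≤ Nat.card V := by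
  by_contra! hlt
  obtain ⟨c, hc⟩ := hS.nonempty_left
  obtain ⟨j, hj⟩ := exists_ncard_fiber_lt c hlt
  have := hS.one_lt_ncard_fiber hG (hS.isProperColoring hc) j
  omega

lemma exists_fiber_eq_pair (hS : KempeSplit G k A B) (hG : IsDiamTwoRegular G k)
    (hc : IsProperColoring G k c) : ∃ u a, u ≠ a ∧ c ⁻¹' {c u} = {u, a} := by
  obtain ⟨⟨v⟩, -⟩ := Nat.card_pos_iff.1 (Nat.zero_lt_of_lt hG.lt_card)
  have hlt : Nat.card V < k * 3 := by
    have := hS.card_le hG v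
    have := hS.ncard_coincide_lt hG v
    have := hS.symm.ncard_coincide_lt hG v
    omega
  obtain ⟨j, hj⟩ := exists_ncard_fiber_lt c hlt
  have := hS.one_lt_ncard_fiber hG hc j
  obtain ⟨u, a, hua, hfib⟩ := Set.ncard_eq_two.1 (show (c ⁻¹' {j}).ncard = 2 by omega)
  obtain rfl : c u = j := hfib.ge (.inl rfl)
  exact ⟨u, a, hua, hfib⟩

lemma adj_of_fiber_eq_pair (hS : KempeSplit G k A B) (hG : IsDiamTwoRegular G k) (hc : c ∈ A)
    (hfib : c ⁻¹' {c u} = {u, a}) (hb : Coincide B u b) : G.Adj a b := by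
  obtain ⟨y, hby, hcy⟩ := hS.exists_adj_eq hG hc hb.symm
  obtain rfl | rfl := hfib.le hcy
  exacts [absurd hby.symm (hS.symm.not_adj hb), hby.symm]

-- Otherwise `{a, b}` is a Kempe chain, and swapping its colours gives `u` and `b` the same colour.
lemma exists_ne_adj_eq (hS : KempeSplit G k A B) (hG : IsDiamTwoRegular G k) (hc : c ∈ A)
    (hua : u ≠ a) (hfib : c ⁻¹' {c u} = {u, a}) (hb : Coincide B u b) :
    ∃ y ≠ b, G.Adj a y ∧ c y = c b := by
  by_contra! hno
  have hprop := hS.isProperColoring hc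
  have hab := hS.adj_of_fiber_eq_pair hG hc hfib hb
  have hca : c a = c u := hfib.ge (.inr rfl)
  have hclosed : IsKempeClosed G c (c a) (c b) {a, b} := by
    refine ⟨by rintro x (rfl | rfl); exacts [.inl rfl, .inr rfl], ?_⟩
    rintro x (rfl | rfl) y hxy (hy | hy)
    · exact absurd hy.symm (hprop hxy)
    · exact .inr (by_contra fun hyb => hno y hyb hxy hy)
    · obtain rfl | rfl := hfib.le (hy.trans hca)
      exacts [absurd hxy.symm (hS.symm.not_adj hb), .inl rfl]
    · exact absurd hy.symm (hprop hxy)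
  have hmem := hS.mem_left_of_kempeEquiv c hc _ hclosed.kempeEquiv_kempeSwap
  refine hS.disjoint.notMem_of_mem_left hmem
    (hS.symm.mem_of_eq hG hb (hS.isProperColoring hmem) ?_)
  have hu : u ∉ ({a, b} : Set V) := by
    rintro (h | h)
    exacts [hua h, hb.1 h]
  rw [kempeSwap_of_notMem hu, kempeSwap_of_mem (.inr rfl), Equiv.swap_apply_right, hca]

-- Otherwise `a` could be recoloured, leaving `u` alone in its class.
lemma exists_adj_of_fiber_eq_pair (hS : KempeSplit G k A B) (hG : IsDiamTwoRegular G k)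
    (hc : IsProperColoring G k c) (hua : u ≠ a) (hfib : c ⁻¹' {c u} = {u, a}) {j : Fin k}
    (hj : j ≠ c a) : ∃ y, G.Adj a y ∧ c y = j := by
  by_contra! hno
  have hd := hc.of_kempeEquiv (hc.kempeEquiv_update hno)
  obtain ⟨y, hyu, hy⟩ := hS.exists_ne_eq hG hd u
  have hca : c a = c u := hfib.ge (.inr rfl)
  rw [Function.update_of_ne hua] at hy
  obtain rfl | hya := eq_or_ne y a
  · rw [Function.update_self] at hy
    exact hj (hy.trans hca.symm)
  · rw [Function.update_of_ne hya] at hy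
    exact (hfib.le hy).elim hyu hya

-- If `b` and `b'` were two such vertices, `a` would have two neighbours of each of the colours of
-- `b` and `b'`, leaving too few neighbours for the remaining colours.
lemma subsingleton_coincide (hS : KempeSplit G k A B) (hG : IsDiamTwoRegular G k) (hc : c ∈ A)
    (hua : u ≠ a) (hfib : c ⁻¹' {c u} = {u, a}) : {b | Coincide B u b}.Subsingleton := by
  intro b hb b' hb'
  by_contra hne
  have hcbb' : c b ≠ c b' := fun h =>
    hS.symm.not_adj hb' (hS.adj_of_coincide hG ⟨hne, c, hc, h⟩ hb.symm).symm
  obtain ⟨y, hyb, hay, hcy⟩ := hS.exists_ne_adj_eq hG hc hua hfib hb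
  obtain ⟨y', hyb', hay', hcy'⟩ := hS.exists_ne_adj_eq hG hc hua hfib hb'
  have hsub : {c a}ᶜ ⊆ c '' (G.neighborSet a \ {b, b'}) := by
    intro j hj
    obtain ⟨x, hax, rfl⟩ := hS.exists_adj_of_fiber_eq_pair hG (hS.isProperColoring hc) hua hfib hj
    by_cases hx : x ∈ ({b, b'} : Set V)
    · obtain rfl | rfl := hx
      · exact ⟨y, ⟨hay, by rintro (rfl | rfl); exacts [hyb rfl, hcbb' hcy.symm]⟩, hcy⟩
      · exact ⟨y', ⟨hay', by rintro (rfl | rfl); exacts [hcbb' hcy', hyb' rfl]⟩, hcy'⟩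
    · exact ⟨x, ⟨hax, hx⟩, rfl⟩
  have hpair : {b, b'} ⊆ G.neighborSet a := Set.pair_subset
    (hS.adj_of_fiber_eq_pair hG hc hfib hb) (hS.adj_of_fiber_eq_pair hG hc hfib hb')
  have hcard := (Set.ncard_le_ncard hsub).trans Set.ncard_image_le
  rw [Set.ncard_compl, Set.ncard_singleton, Nat.card_fin, Set.ncard_sdiff hpair,
    Set.ncard_pair hne, hG.ncard_neighborSet] at hcard
  have := hG.four_le
  omega

end Finite

end KempeSplit

theorem IsDiamTwoRegular.not_kempeSplit [Finite V] (hG : IsDiamTwoRegular G k) :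
    ¬ KempeSplit G k A B := by
  intro hS
  obtain ⟨c, hc⟩ := hS.nonempty_left
  obtain ⟨u, a, hua, hfib⟩ := hS.exists_fiber_eq_pair hG (hS.isProperColoring hc)
  have hB : {b | Coincide B u b}.Subsingleton := hS.subsingleton_coincide hG hc hua hfib
  obtain ⟨b, hub, d, hd, hdub⟩ := hS.symm.exists_coincide hG u
  have hfib' : d ⁻¹' {d u} = {u, b} := by
    refine Set.Subset.antisymm (fun y hy => or_iff_not_imp_left.2 fun hyu => ?_) ?_
    · exact hB ⟨Ne.symm hyu, d, hd, Eq.symm hy⟩ ⟨hub, d, hd, hdub⟩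
    · exact Set.pair_subset rfl hdub.symm
  have hA : {a | Coincide A u a}.Subsingleton := hS.symm.subsingleton_coincide hG hd hub hfib'
  have := hS.card_le hG u
  have := Set.ncard_le_one_iff_subsingleton.2 hA
  have := Set.ncard_le_one_iff_subsingleton.2 hB
  have := hS.two_mul_le_card hG
  have := hG.four_le
  omega

theorem IsDiamTwoRegular.kempeClass [Finite V] (hG : IsDiamTwoRegular G k) : KempeClass G k := by
  intro c c' hc hc'
  by_contra h
  exact hG.not_kempeSplit (kempeSplit_of_not_kempeEquiv hc hc' h)

end KempeSplit

section Diameter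

variable {G : SimpleGraph V} {u v : V}

lemma commonNeighbors_nonempty_of_dist_le_two (hr : G.Reachable u v) (h : G.dist u v ≤ 2)
    (huv : u ≠ v) (hadj : ¬ G.Adj u v) : (G.commonNeighbors u v).Nonempty := by
  have hdist : G.dist u v = 2 := h.antisymm (hr.one_lt_dist_of_ne_of_not_adj huv hadj)
  exact (edist_eq_two_iff.1 (hr.coe_dist_eq_edist.symm.trans (congrArg _ hdist))).2.2

lemma ncard_neighborSet_add_one_lt_card [Finite V] (huv : u ≠ v) (hadj : ¬ G.Adj u v) :
    (G.neighborSet u).ncard + 1 < Nat.card V := by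
  rw [← Set.ncard_insert_of_notMem G.notMem_neighborSet_self, ← Set.ncard_univ]
  refine Set.ncard_lt_ncard (Set.ssubset_univ_iff.2 (Set.ne_univ_iff_exists_notMem _ |>.2 ⟨v, ?_⟩))
  exact fun hv => hv.elim huv.symm hadj

end Diameter

/-- for `k ≥ 4`, a 3-connected `k`-regular graph of diameter 2 has all
its proper `k`-colourings in a single Kempe class. -/
theorem stmt13 {V : Type*} [Fintype V] (k : ℕ) (hk : 4 ≤ k) (G : SimpleGraph V)
    [DecidableRel G.Adj] (hreg : G.IsRegularOfDegree k) (h3c : ThreeConnected G)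
    (hconn : G.Connected) (hle : ∀ u v : V, G.dist u v ≤ 2)
    (hex : ∃ u v : V, G.dist u v = 2) : KempeClass G k := by
  have hcard (v : V) : (G.neighborSet v).ncard = k := by
    rw [← hreg v, ← card_neighborFinset_eq_degree, ← coe_neighborFinset, Set.ncard_coe_finset]
  obtain ⟨u, v, huv⟩ := hex
  have hne : u ≠ v := by
    rintro rfl
    simp at huv
  have hadj : ¬ G.Adj u v := fun hadj => by simp [dist_eq_one_iff_adj.2 hadj] at huv
  exact IsDiamTwoRegular.kempeClass
    { four_le := hk
      ncard_neighborSet := hcard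
      preconnected := fun S hS => (h3c.2 S hS).preconnected
      commonNeighbors_nonempty := fun x y =>
        commonNeighbors_nonempty_of_dist_le_two (hconn.preconnected x y) (hle x y)
      lt_card := hcard u ▸ ncard_neighborSet_add_one_lt_card hne hadj }
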